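/- Let α ∈ [0,1] be irrational and let 0 < δ ≤ ∞. For every ε > 0 there exist a Borel set C ⊆ D(δ), a Borel probability measure μ on [0,1] with μ(C) = 1, and r₀ ∈ (0,1) such that for every x ∈ C and every r with 0 < r ≤ r₀, one has μ(B(x,r)) ≤ ε·(−log r)^{−1}, where B(x,r) is the closed interval of radius r centered at x. In particular ℋ^{ω_1}(D(δ)) = ∞. -/

import Mathlib

open Filter MeasureTheory Set
open scoped ENNReal NNReal Classical

/-- Distance from `x : ℝ` to the nearest integer, i.e. `‖x‖_{ℝ/ℤ}`. -/
noncomputable def distZ (x : ℝ) : ℝ := |x - round x|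

/-- The `ω`-Hausdorff measure of a set `S ⊆ ℝ`: the limit as `ε → 0⁺` (equivalently the
supremum over `ε > 0`, by monotonicity) of the infimum of `∑ᵢ ω (bᵢ - aᵢ)` over countable
covers of `S` by intervals `(aᵢ, bᵢ)` of length at most `ε`. -/
noncomputable def gaugeHaus (ω : ℝ → ℝ) (S : Set ℝ) : ℝ≥0∞ :=
  ⨆ (ε : ℝ) (_ : 0 < ε),
    ⨅ (a : ℕ → ℝ) (b : ℕ → ℝ) (_ : S ⊆ ⋃ i, Set.Ioo (a i) (b i))
      (_ : ∀ i, a i ≤ b i ∧ b i - a i ≤ ε),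
      ∑' i, ENNReal.ofReal (ω (b i - a i))

/-- The gauge function `ω_s(r) = (-log r)^{-s}` for `0 < r < 1`, and `ω_s(0) = 0`. -/
noncomputable def omegaS (s : ℝ) (r : ℝ) : ℝ := if 0 < r then (-Real.log r) ^ (-s) else 0

/-- The resonance strength `δ(α, x) = limsup_{|k| → ∞} (-log ‖x - kα‖_{ℝ/ℤ}) / |k|`,
with the convention that it is `∞` when `x ≡ kα (mod ℤ)` for some `k ∈ ℤ`. -/

noncomputable def resStrength (α x : ℝ) : ℝ≥0∞ :=
  if ∃ k m : ℤ, x = (k : ℝ) * α + (m : ℝ) then ⊤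
  else Filter.limsup
    (fun k : ℤ => ENNReal.ofReal (-Real.log (distZ (x - (k : ℝ) * α)) / |(k : ℝ)|))
    Filter.cofinite

/-- The exact resonance level set `D(δ) = {x ∈ [0,1] : δ(α,x) = δ}`. -/
noncomputable def resSet (α : ℝ) (δ : ℝ≥0∞) : Set ℝ :=
  {x ∈ Set.Icc (0 : ℝ) 1 | resStrength α x = δ}

/-!
Given a good rational approximation of `α` with denominator `q`, every generic point of an interval
lies within `1 / q` of an orbit point `k α + m` with `|k| ≤ q / 2`, and all points within about
`exp (-A |k|)` of that orbit point are nonresonant at the orders between that of the interval and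
`|k|`. For fixed small `η` the balls of radius `η / q` around these orbit points form a Vitali
family, so finitely many disjoint ones fill a fixed proportion of the interval. Each of them
receives a child interval of length `exp (-A |k|)` and a share of the mass proportional to `η / q`.
Iterating with rates tending to `δ` gives a Cantor set inside `D(δ)`. Since `|k| ≤ q / 2`, the mass
of a child times the logarithm of its length is `O(η)`, and `η` may be chosen at each node: this is
the gain of the arbitrary factor `ε`, and the mass distribution principle then gives infinite
measure.
-/

/-! ### Measures on trees of sets -/

theorem exists_weak_limit_of_forall_isCompact {X : Type*} [TopologicalSpace X] [T2Space X]
    [HasOuterApproxClosed X] [MeasurableSpace X] [BorelSpace X] {K : Set X} (hK : IsCompact K)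
    (ν : ℕ → ProbabilityMeasure X) (hν : ∀ j, (ν j : Measure X) Kᶜ = 0) :
    ∃ μ : ProbabilityMeasure X, ∀ (F : Set X) (c : ℝ≥0∞), IsClosed F →
      (∀ᶠ j in atTop, c ≤ (ν j : Measure X) F) → c ≤ (μ : Measure X) F := by
  have htight : IsTightMeasureSet {(m : Measure X) | m ∈ range ν} := by
    rw [isTightMeasureSet_iff_exists_isCompact_measure_compl_le]
    rintro ε -
    refine ⟨K, hK, ?_⟩
    rintro _ ⟨_, ⟨j, rfl⟩, rfl⟩
    exact (hν j).trans_le zero_le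
  obtain ⟨μ, -, hμ⟩ := (isCompact_closure_of_isTightMeasureSet htight).ultrafilter_le_nhds
    ((hyperfilter ℕ).map ν)
    (le_principal_iff.2 (Filter.mem_map.2 (univ_mem' fun j => subset_closure ⟨j, rfl⟩)))
  have hlim : Tendsto ν (hyperfilter ℕ : Filter ℕ) (nhds μ) := hμ
  refine ⟨μ, fun F c hF h => ?_⟩
  exact (le_limsup_of_frequently_le (h.filter_mono Nat.hyperfilter_le_atTop).frequently).trans
    (ProbabilityMeasure.limsup_measure_closed_le_of_tendsto hlim hF)

section MassTree

variable {V X : Type*}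

/-- The `n`-th generation of descendants of `v` in the forest with offspring map `children`. -/
noncomputable def descendants (children : V → Finset V) (v : V) : ℕ → Finset V
  | 0 => {v}
  | n + 1 => (descendants children v n).biUnion children

/-- The Cantor-type set generated by a root `v₀`: the points lying, for every `n`, in the cell of
some `n`-th generation descendant of `v₀`. -/
def limitSet (cell : V → Set X) (children : V → Finset V) (v₀ : V) : Set X :=
  ⋂ n, ⋃ v ∈ descendants children v₀ n, cell v

/-- Nested nonempty closed cells, those of siblings being disjoint, with a mass on every node that
is distributed among its children. -/
structure IsMassTree [TopologicalSpace X] (cell : V → Set X) (mass : V → ℝ≥0∞)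
    (children : V → Finset V) : Prop where
  isClosed_cell : ∀ v, IsClosed (cell v)
  nonempty_cell : ∀ v, (cell v).Nonempty
  cell_subset : ∀ v, ∀ u ∈ children v, cell u ⊆ cell v
  pairwiseDisjoint_cell : ∀ v, (children v : Set V).PairwiseDisjoint cell
  sum_mass : ∀ v, ∑ u ∈ children v, mass u = mass v

theorem mem_descendants_succ {children : V → Finset V} {v u : V} {n : ℕ} :
    u ∈ descendants children v (n + 1) ↔ ∃ w ∈ descendants children v n, u ∈ children w :=
  Finset.mem_biUnion

theorem descendants_subset_descendants_add {children : V → Finset V} {v₀ v : V} {n : ℕ}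
    (hv : v ∈ descendants children v₀ n) (i : ℕ) :
    descendants children v i ⊆ descendants children v₀ (n + i) := by
  induction i with
  | zero => exact Finset.singleton_subset_iff.2 hv
  | succ i ih => exact Finset.biUnion_subset_biUnion_of_subset_left _ ih

namespace IsMassTree

variable [TopologicalSpace X] {cell : V → Set X} {mass : V → ℝ≥0∞} {children : V → Finset V}

theorem cell_subset_of_mem_descendants (h : IsMassTree cell mass children) {v u : V} {n : ℕ}
    (hu : u ∈ descendants children v n) : cell u ⊆ cell v := by
  induction n generalizing u with
  | zero => rw [Finset.mem_singleton.1 hu]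
  | succ n ih =>
    obtain ⟨w, hw, huw⟩ := mem_descendants_succ.1 hu
    exact (h.cell_subset w u huw).trans (ih hw)

theorem pairwiseDisjoint_descendants (h : IsMassTree cell mass children) (v : V) (n : ℕ) :
    (descendants children v n : Set V).PairwiseDisjoint cell := by
  induction n with
  | zero => simp only [descendants, Finset.coe_singleton, pairwiseDisjoint_singleton]
  | succ n ih =>
    intro u hu u' hu' hne
    obtain ⟨w, hw, huw⟩ := mem_descendants_succ.1 hu
    obtain ⟨w', hw', huw'⟩ := mem_descendants_succ.1 hu'
    rcases eq_or_ne w w' with rfl | hww'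
    · exact h.pairwiseDisjoint_cell w huw huw' hne
    · exact (ih hw hw' hww').mono (h.cell_subset w u huw) (h.cell_subset w' u' huw')

theorem sum_mass_descendants (h : IsMassTree cell mass children) (v : V) (n : ℕ) :
    ∑ u ∈ descendants children v n, mass u = mass v := by
  induction n with
  | zero => exact Finset.sum_singleton _ _
  | succ n ih =>
    rw [descendants, Finset.sum_biUnion, Finset.sum_congr rfl fun w _ => h.sum_mass w, ih]
    intro w hw w' hw' hne
    refine Finset.disjoint_left.2 fun u hu hu' => ?_
    obtain ⟨x, hx⟩ := h.nonempty_cell u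
    exact disjoint_left.1 (h.pairwiseDisjoint_descendants v n hw hw' hne)
      (h.cell_subset w u hu hx) (h.cell_subset w' u hu' hx)

theorem measurableSet_limitSet [MeasurableSpace X] [OpensMeasurableSpace X]
    (h : IsMassTree cell mass children) (v₀ : V) : MeasurableSet (limitSet cell children v₀) :=
  .iInter fun _ => Finset.measurableSet_biUnion _ fun v _ => (h.isClosed_cell v).measurableSet

theorem exists_branch (h : IsMassTree cell mass children) {v₀ : V} {x : X}
    (hx : x ∈ limitSet cell children v₀) :
    ∃ v : ℕ → V, ∀ n, v n ∈ descendants children v₀ n ∧ v (n + 1) ∈ children (v n) ∧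
      x ∈ cell (v n) := by
  choose v hv hxv using fun n => mem_iUnion₂.1 (mem_iInter.1 hx n)
  refine ⟨v, fun n => ⟨hv n, ?_, hxv n⟩⟩
  obtain ⟨w, hw, hvw⟩ := mem_descendants_succ.1 (hv (n + 1))
  have hwn : w = v n := (h.pairwiseDisjoint_descendants v₀ n).elim_set hw (hv n) x
    (h.cell_subset w _ hvw (hxv (n + 1))) (hxv n)
  exact hwn ▸ hvw

theorem limitSet_inter_cell_subset (h : IsMassTree cell mass children) {v₀ v : V} {n : ℕ}
    (hv : v ∈ descendants children v₀ n) :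
    limitSet cell children v₀ ∩ cell v ⊆ ⋃ u ∈ children v, limitSet cell children v₀ ∩ cell u := by
  rintro x ⟨hx, hxv⟩
  obtain ⟨w, hw⟩ := h.exists_branch hx
  have hwn : w n = v :=
    (h.pairwiseDisjoint_descendants v₀ n).elim_set (hw n).1 hv x (hw n).2.2 hxv
  exact mem_biUnion (hwn ▸ (hw n).2.1) ⟨hx, (hw (n + 1)).2.2⟩

section Measure

variable [MeasurableSpace X]

/-- Approximating discrete measures: the masses of a generation are put on points of its cells. -/
noncomputable def discreteMeasure (h : IsMassTree cell mass children) (v₀ : V)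
    (j : ℕ) : Measure X :=
  ∑ v ∈ descendants children v₀ j, mass v • Measure.dirac (h.nonempty_cell v).some

theorem discreteMeasure_univ (h : IsMassTree cell mass children) (v₀ : V)
    (j : ℕ) : h.discreteMeasure v₀ j univ = mass v₀ := by
  simp only [discreteMeasure, Measure.finsetSum_apply, Measure.smul_apply, measure_univ,
    smul_eq_mul, mul_one, h.sum_mass_descendants]

theorem mass_le_discreteMeasure (h : IsMassTree cell mass children)
    {v₀ v : V} {n : ℕ} (hv : v ∈ descendants children v₀ n) (i : ℕ) :
    mass v ≤ h.discreteMeasure v₀ (n + i) (cell v) := by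
  rw [discreteMeasure, Measure.finsetSum_apply, ← h.sum_mass_descendants v i]
  refine le_trans (Finset.sum_le_sum fun u hu => ?_)
    (Finset.sum_le_sum_of_subset (descendants_subset_descendants_add hv i))
  rw [Measure.smul_apply, Measure.dirac_apply_of_mem
    (h.cell_subset_of_mem_descendants hu (h.nonempty_cell u).some_mem), smul_eq_mul, mul_one]

theorem measure_limitSet [OpensMeasurableSpace X] (h : IsMassTree cell mass children) {v₀ : V}
    (hv₀ : mass v₀ = 1) {μ : Measure X} [IsProbabilityMeasure μ]
    (hμ : ∀ n, ∀ v ∈ descendants children v₀ n, mass v ≤ μ (cell v)) :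
    μ (limitSet cell children v₀) = 1 := by
  rw [← mem_ae_iff_prob_eq_one (h.measurableSet_limitSet v₀), limitSet, countable_iInter_mem]
  intro n
  rw [mem_ae_iff_prob_eq_one
    (Finset.measurableSet_biUnion _ fun v _ => (h.isClosed_cell v).measurableSet)]
  refine le_antisymm prob_le_one ?_
  rw [measure_biUnion_finset (h.pairwiseDisjoint_descendants v₀ n)
    fun v _ => (h.isClosed_cell v).measurableSet, ← hv₀, ← h.sum_mass_descendants v₀ n]
  exact Finset.sum_le_sum (hμ n)

theorem measure_cell_le [OpensMeasurableSpace X] (h : IsMassTree cell mass children) {v₀ : V}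
    (hv₀ : mass v₀ = 1) {μ : Measure X} [IsProbabilityMeasure μ]
    (hμ : ∀ n, ∀ v ∈ descendants children v₀ n, mass v ≤ μ (cell v)) {n : ℕ} {v : V}
    (hv : v ∈ descendants children v₀ n) : μ (cell v) ≤ mass v := by
  have hsum := h.sum_mass_descendants v₀ n
  rw [hv₀, ← Finset.add_sum_erase _ _ hv] at hsum
  have hne : ∑ u ∈ (descendants children v₀ n).erase v, mass u ≠ ⊤ :=
    ne_top_of_le_ne_top ENNReal.one_ne_top (hsum ▸ le_add_self)
  rw [← ENNReal.add_le_add_iff_right hne, hsum]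
  calc μ (cell v) + ∑ u ∈ (descendants children v₀ n).erase v, mass u
      ≤ μ (cell v) + ∑ u ∈ (descendants children v₀ n).erase v, μ (cell u) := by
        gcongr with u hu
        exact hμ n u (Finset.mem_of_mem_erase hu)
    _ = μ (⋃ u ∈ descendants children v₀ n, cell u) := by
        rw [Finset.add_sum_erase _ (fun u => μ (cell u)) hv, measure_biUnion_finset
          (h.pairwiseDisjoint_descendants v₀ n) fun v _ => (h.isClosed_cell v).measurableSet]
    _ ≤ 1 := prob_le_one

theorem exists_measure [T2Space X] [HasOuterApproxClosed X] [BorelSpace X]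
    (h : IsMassTree cell mass children) {v₀ : V} (hv₀ : mass v₀ = 1)
    (hK : IsCompact (cell v₀)) :
    ∃ μ : Measure X, IsProbabilityMeasure μ ∧ μ (limitSet cell children v₀) = 1 ∧
      ∀ n, ∀ v ∈ descendants children v₀ n, μ (cell v) ≤ mass v := by
  let ν : ℕ → ProbabilityMeasure X := fun j =>
    ⟨h.discreteMeasure v₀ j, ⟨(h.discreteMeasure_univ v₀ j).trans hv₀⟩⟩
  have hνroot : ∀ j, (ν j : Measure X) (cell v₀)ᶜ = 0 := by
    intro j
    refine (prob_compl_eq_zero_iff (h.isClosed_cell v₀).measurableSet).2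
      (le_antisymm prob_le_one ?_)
    have hroot := h.mass_le_discreteMeasure (n := 0) (Finset.mem_singleton_self v₀) j
    rwa [hv₀, zero_add] at hroot
  obtain ⟨μ, hμ⟩ := exists_weak_limit_of_forall_isCompact hK ν hνroot
  have hmass : ∀ n, ∀ v ∈ descendants children v₀ n, mass v ≤ (μ : Measure X) (cell v) := by
    refine fun n v hv => hμ _ _ (h.isClosed_cell v) (eventually_atTop.2 ⟨n, fun j hj => ?_⟩)
    obtain ⟨i, rfl⟩ := Nat.exists_eq_add_of_le hj
    exact h.mass_le_discreteMeasure hv i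
  exact ⟨μ, inferInstance, h.measure_limitSet hv₀ hmass, fun n v hv =>
    h.measure_cell_le hv₀ hmass hv⟩

end Measure

end IsMassTree

end MassTree

/-! ### Distance to the nearest integer -/

theorem distZ_eq_norm (x : ℝ) : distZ x = ‖(x : UnitAddCircle)‖ := UnitAddCircle.norm_eq.symm

theorem distZ_nonneg (x : ℝ) : 0 ≤ distZ x := abs_nonneg _

theorem distZ_le_abs_sub_intCast (x : ℝ) (m : ℤ) : distZ x ≤ |x - m| := round_le x m

theorem distZ_le_add_abs_sub (x y : ℝ) : distZ x ≤ distZ y + |x - y| := by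
  refine (distZ_le_abs_sub_intCast x (round y)).trans ?_
  rw [distZ, add_comm]
  exact (abs_sub_le x y (round y))

theorem distZ_add_intCast (x : ℝ) (m : ℤ) : distZ (x + m) = distZ x := by
  rw [distZ, distZ, round_add_intCast, Int.cast_add, add_sub_add_right_eq_sub]

theorem distZ_sub_le_abs_sub_add (x β : ℝ) (m : ℤ) : distZ (x - β) ≤ |x - (β + m)| := by
  rw [← sub_sub]
  exact distZ_le_abs_sub_intCast _ m

theorem distZ_eq_zero_iff {x : ℝ} : distZ x = 0 ↔ ∃ m : ℤ, x = m := by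
  rw [distZ, abs_eq_zero, sub_eq_zero]
  exact ⟨fun h => ⟨_, h⟩, by rintro ⟨m, rfl⟩; rw [round_intCast]⟩

theorem volume_Icc_inter_distZ_sub_lt_le (β ρ : ℝ) :
    volume (Icc 0 1 ∩ {y | distZ (y - β) < ρ}) ≤ ENNReal.ofReal (2 * ρ) := by
  let coe : ℝ → UnitAddCircle := (↑)
  have hmk := UnitAddCircle.measurePreserving_mk 0
  rw [zero_add] at hmk
  have hball : MeasurableSet (Metric.closedBall (β : UnitAddCircle) ρ) := measurableSet_closedBall
  calc volume (Icc 0 1 ∩ {y | distZ (y - β) < ρ})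
      ≤ volume (coe ⁻¹' Metric.closedBall (β : UnitAddCircle) ρ ∩ Icc (0 : ℝ) 1) := by
        refine measure_mono fun y hy => ⟨?_, hy.1⟩
        rw [mem_preimage, Metric.mem_closedBall, dist_eq_norm, ← AddCircle.coe_sub,
          ← distZ_eq_norm]
        exact hy.2.le
    _ = volume.restrict (Ioc (0 : ℝ) 1) (coe ⁻¹' Metric.closedBall (β : UnitAddCircle) ρ) := by
        rw [restrict_Ioc_eq_restrict_Icc, Measure.restrict_apply (hmk.measurable hball)]
    _ = volume (Metric.closedBall (β : UnitAddCircle) ρ) :=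
        hmk.measure_preimage hball.nullMeasurableSet
    _ ≤ ENNReal.ofReal (2 * ρ) := by
        rw [AddCircle.volume_closedBall]
        exact ENNReal.ofReal_le_ofReal (min_le_right _ _)

/-! ### Orbits at the scale of a good rational approximation -/

theorem exists_rat_le_den_abs_sub_lt {α : ℝ} (hα : Irrational α) (N : ℕ) :
    ∃ r : ℚ, N ≤ r.den ∧ |α - r| < 1 / (r.den : ℝ) ^ 2 := by
  obtain ⟨ε, hε, hε0⟩ := ((hα.eventually_forall_le_dist_cast_rat_of_den_le N).filter_mono
    nhdsWithin_le_nhds |>.and (self_mem_nhdsWithin (s := Ioi 0))).exists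
  obtain ⟨p, hp⟩ := Rat.denseRange_cast.exists_dist_lt α hε0
  obtain ⟨r, hr, hrp⟩ := Real.exists_rat_abs_sub_lt_and_lt_of_irrational hα p
  refine ⟨r, le_of_not_gt fun hN => ?_, hr⟩
  exact (hε r hN.le).not_gt (hrp.trans hp)

section RationalApproximation

variable {α : ℝ} {r : ℚ}

theorem exists_int_mul_add_eq (r : ℚ) (a : ℤ) :
    ∃ k m : ℤ, 2 * |k| ≤ r.den ∧ k * r.num + m * r.den = a := by
  obtain ⟨u, v, huv⟩ := Rat.isCoprime_num_den r
  have hlow := Int.le_bmod (x := a * u) r.pos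
  have hhigh := Int.bmod_le (x := a * u) r.pos
  obtain ⟨t, ht⟩ : (r.den : ℤ) ∣ a * u - Int.bmod (a * u) r.den := Int.dvd_self_sub_bmod
  refine ⟨Int.bmod (a * u) r.den, a * v + t * r.num, ?_, by
    linear_combination a * huv - r.num * ht⟩
  rcases abs_cases (Int.bmod (a * u) r.den) with h | h <;> omega

theorem exists_orbit_point_abs_sub_le (hr : |α - r| < 1 / (r.den : ℝ) ^ 2) (x : ℝ) :
    ∃ k m : ℤ, 2 * |k| ≤ r.den ∧ |x - (k * α + m)| ≤ 1 / r.den := by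
  have hq : (0 : ℝ) < r.den := by exact_mod_cast r.pos
  obtain ⟨k, m, hk, ha⟩ := exists_int_mul_add_eq r (round (x * r.den))
  refine ⟨k, m, hk, ?_⟩
  have hk' : |(k : ℝ)| ≤ r.den / 2 := by
    have : 2 * |(k : ℝ)| ≤ r.den := by exact_mod_cast hk
    linarith
  have ha' : (k : ℝ) * r.num + m * r.den = round (x * r.den) := by exact_mod_cast ha
  have hsplit : x - (k * α + m) = (x * r.den - round (x * r.den)) / r.den - k * (α - r) := by
    rw [← ha', Rat.cast_def]
    field_simp
    ring
  calc |x - (k * α + m)|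
      ≤ |x * r.den - round (x * r.den)| / r.den + |(k : ℝ)| * |α - r| := by
        rw [hsplit, ← abs_mul, ← abs_of_pos hq, ← abs_div, abs_of_pos hq]
        exact abs_sub _ _
    _ ≤ 1 / 2 / r.den + r.den / 2 * (1 / (r.den : ℝ) ^ 2) := by
        gcongr
        exact abs_sub_round _
    _ = 1 / r.den := by field_simp; norm_num

theorem one_div_den_sq_le_distZ_mul (hr : |α - r| < 1 / (r.den : ℝ) ^ 2) {n : ℤ} (hn0 : n ≠ 0)
    (hn : |n| < r.den) : 1 / (r.den : ℝ) ^ 2 ≤ distZ (n * α) := by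
  have hq : (0 : ℝ) < r.den := by exact_mod_cast r.pos
  set m := round (n * α)
  have hne : n * r.num - m * r.den ≠ 0 := by
    intro h0
    have hdvd : (r.den : ℤ) ∣ n :=
      (Rat.isCoprime_num_den r).symm.dvd_of_dvd_mul_right ⟨m, by linarith⟩
    exact (Int.le_of_dvd (abs_pos.2 hn0) ((dvd_abs _ _).2 hdvd)).not_gt hn
  have hint : (1 : ℝ) ≤ |(n : ℝ) * r.num - m * r.den| := by exact_mod_cast Int.one_le_abs hne
  have hn' : |(n : ℝ)| ≤ r.den - 1 := by
    have : |n| ≤ (r.den : ℤ) - 1 := by omega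
    exact_mod_cast this
  have hsplit : (n : ℝ) * r.num - m * r.den = (n * α - m) * r.den - n * (α - r) * r.den := by
    rw [Rat.cast_def]
    field_simp
    ring
  have hsum : 1 ≤ distZ (n * α) * r.den + (r.den - 1) * (1 / (r.den : ℝ) ^ 2) * r.den :=
    calc 1 ≤ |(n * α - m) * r.den - n * (α - r) * r.den| := hsplit ▸ hint
      _ ≤ distZ (n * α) * r.den + |(n : ℝ)| * |α - r| * r.den := by
        rw [distZ, ← abs_of_pos hq, ← abs_mul, ← abs_mul, ← abs_mul, abs_of_pos hq]
        exact abs_sub _ _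
      _ ≤ _ := by gcongr; exact (abs_nonneg _).trans hn'
  rw [div_le_iff₀ (by positivity)]
  have hcancel : (r.den - 1) * (1 / (r.den : ℝ) ^ 2) * r.den = 1 - 1 / r.den := by field_simp
  have hmul : 1 / (r.den : ℝ) * r.den = 1 := by field_simp
  nlinarith

end RationalApproximation

/-! ### Resonant points -/

/-- The points exponentially close, with rate `B`, to some multiple `l * α` with `|l| ≥ K`. -/
def resonantSet (α B : ℝ) (K : ℕ) : Set ℝ :=
  {y | ∃ l : ℤ, K ≤ |l| ∧ distZ (y - l * α) < 2 * Real.exp (-(B * |(l : ℝ)|))}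

theorem summable_exp_neg_mul_abs_intCast {B : ℝ} (hB : 0 < B) :
    Summable fun l : ℤ => Real.exp (-(B * |(l : ℝ)|)) := by
  have hnat : Summable fun n : ℕ => Real.exp (-(B * n)) := by
    simpa only [mul_comm B, ← mul_neg] using
      Real.summable_exp_nat_mul_iff.2 (neg_lt_zero.2 hB)
  refine .of_nat_of_neg ?_ ?_ <;>
    simpa only [Int.cast_neg, Int.cast_natCast, abs_neg, Nat.abs_cast] using hnat

theorem volume_Icc_inter_exp_close_le (α B : ℝ) (l : ℤ) :
    volume (Icc 0 1 ∩ {y | distZ (y - l * α) < 2 * Real.exp (-(B * |(l : ℝ)|))}) ≤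
      ENNReal.ofReal (4 * Real.exp (-(B * |(l : ℝ)|))) :=
  (volume_Icc_inter_distZ_sub_lt_le _ _).trans_eq (by ring_nf)

theorem volume_Icc_inter_resonantSet_le (α : ℝ) {A B : ℝ} (hA : 0 ≤ A) (hAB : A < B) (K : ℕ) :
    volume (Icc 0 1 ∩ resonantSet α B K) ≤
      ENNReal.ofReal (4 * (∑' l : ℤ, Real.exp (-((B - A) * |(l : ℝ)|))) * Real.exp (-(A * K))) := by
  let T : ℤ → Set ℝ := fun l => {y | (K : ℤ) ≤ |l| ∧
    y ∈ Icc 0 1 ∩ {y | distZ (y - l * α) < 2 * Real.exp (-(B * |(l : ℝ)|))}}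
  have hsub : Icc 0 1 ∩ resonantSet α B K ⊆ ⋃ l, T l := by
    rintro y ⟨hy, l, hl, hyl⟩
    exact mem_iUnion.2 ⟨l, hl, hy, hyl⟩
  have hT : ∀ l, volume (T l) ≤
      ENNReal.ofReal (4 * Real.exp (-(A * K)) * Real.exp (-((B - A) * |(l : ℝ)|))) := by
    intro l
    by_cases hl : (K : ℤ) ≤ |l|
    · have hl' : (K : ℝ) ≤ |(l : ℝ)| := by exact_mod_cast hl
      refine (measure_mono fun y hy => hy.2).trans ((volume_Icc_inter_exp_close_le α B l).trans
        (ENNReal.ofReal_le_ofReal ?_))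
      rw [mul_assoc, ← Real.exp_add]
      gcongr
      nlinarith
    · simp only [T, hl, false_and, ofPred_false, measure_empty, zero_le]
  have hsum := (summable_exp_neg_mul_abs_intCast (sub_pos.2 hAB)).mul_left
    (4 * Real.exp (-(A * K)))
  refine (measure_mono hsub).trans ((measure_iUnion_le _).trans
    ((ENNReal.tsum_le_tsum hT).trans ?_))
  rw [← ENNReal.ofReal_tsum_of_nonneg (fun l => by positivity) hsum, tsum_mul_left]
  exact le_of_eq (by ring_nf)

theorem tendsto_exp_neg_mul_natCast {B : ℝ} (hB : 0 < B) :
    Tendsto (fun K : ℕ => Real.exp (-(B * K))) atTop (nhds 0) :=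
  Real.tendsto_exp_neg_atTop_nhds_zero.comp
    (tendsto_natCast_atTop_atTop.const_mul_atTop hB)

theorem eventually_volume_resonantSet_le (α : ℝ) {A B c : ℝ} (hA : 0 ≤ A) (hAB : A < B)
    (hc : 0 < c) : ∀ᶠ K : ℕ in atTop,
      volume (Icc 0 1 ∩ resonantSet α B K) ≤ ENNReal.ofReal (c * Real.exp (-(A * K))) := by
  obtain ⟨A', hAA', hA'B⟩ := exists_between hAB
  obtain ⟨S, hS⟩ : ∃ S : ℝ, ∀ K : ℕ, volume (Icc 0 1 ∩ resonantSet α B K) ≤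
      ENNReal.ofReal (S * Real.exp (-(A' * K))) :=
    ⟨_, volume_Icc_inter_resonantSet_le α (hA.trans hAA'.le) hA'B⟩
  have hlim := (tendsto_exp_neg_mul_natCast (sub_pos.2 hAA')).const_mul S
  rw [mul_zero] at hlim
  filter_upwards [hlim.eventually_le_const hc] with K hK
  refine (hS K).trans (ENNReal.ofReal_le_ofReal ?_)
  calc S * Real.exp (-(A' * K))
      = S * Real.exp (-((A' - A) * K)) * Real.exp (-(A * K)) := by
        rw [mul_assoc, ← Real.exp_add]
        ring_nf
    _ ≤ c * Real.exp (-(A * K)) := by gcongr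

theorem ae_eventually_le_distZ_sub (α : ℝ) {γ : ℝ} (hγ : 0 < γ) :
    ∀ᵐ x ∂volume.restrict (Icc 0 1), ∀ᶠ j : ℤ in cofinite,
      2 * Real.exp (-(γ * |(j : ℝ)|)) ≤ distZ (x - j * α) := by
  have hfin := ae_finite_setOfPred_mem (μ := volume.restrict (Icc 0 1))
    (s := fun j : ℤ => {x | distZ (x - j * α) < 2 * Real.exp (-(γ * |(j : ℝ)|))}) ?_
  · filter_upwards [hfin] with x hx
    rw [eventually_cofinite]
    simpa only [not_le] using hx
  · have hsum := (summable_exp_neg_mul_abs_intCast hγ).mul_left 4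
    refine ne_top_of_le_ne_top hsum.tsum_ofReal_ne_top (ENNReal.tsum_le_tsum fun j => ?_)
    rw [Measure.restrict_apply' measurableSet_Icc, inter_comm]
    exact volume_Icc_inter_exp_close_le α γ j

theorem ae_forall_distZ_sub_pos (α : ℝ) : ∀ᵐ x, ∀ j : ℤ, 0 < distZ (x - j * α) := by
  refine ae_all_iff.2 fun j => ?_
  have hne : ∀ᵐ x, ∀ m : ℤ, x ≠ j * α + m :=
    ae_all_iff.2 fun m => Measure.ae_ne volume (j * α + m)
  filter_upwards [hne] with x hx
  refine (distZ_nonneg _).lt_of_ne' fun h0 => ?_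
  obtain ⟨m, hm⟩ := distZ_eq_zero_iff.1 h0
  exact hx m (by rw [← hm, add_sub_cancel])

/-- The point `y` lies within `2 exp (-a k)` of a multiple of `α` of order exactly `k`, on no
multiple of smaller order, and at distance at least `exp (-b |j|)` from those with
`K ≤ |j| < k`. -/
structure IsResonantAt (α a b : ℝ) (K k : ℕ) (y : ℝ) : Prop where
  near : ∃ j : ℤ, |j| = k ∧ distZ (y - j * α) ≤ 2 * Real.exp (-(a * k))
  pos : ∀ j : ℤ, |j| < k → 0 < distZ (y - j * α)
  far : ∀ j : ℤ, K ≤ |j| → |j| < k → Real.exp (-(b * |(j : ℝ)|)) ≤ distZ (y - j * α)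

theorem int_eventually_cofinite_iff {p : ℤ → Prop} :
    (∀ᶠ j in cofinite, p j) ↔ ∃ L : ℕ, ∀ j : ℤ, L ≤ |j| → p j := by
  rw [Int.cofinite_eq, ← comap_abs_atTop, (atTop_basis.comap (abs : ℤ → ℤ)).eventually_iff]
  refine ⟨fun ⟨L, _, hL⟩ => ⟨L.toNat, fun j hj => hL (le_trans L.self_le_toNat hj)⟩,
    fun ⟨L, hL⟩ => ⟨L, trivial, fun {j} hj => hL j hj⟩⟩

theorem neg_log_div_le {d b k : ℝ} (hk : 0 < k) (hd : Real.exp (-(b * k)) ≤ d) :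
    -Real.log d / k ≤ b := by
  rw [div_le_iff₀ hk, neg_le, Real.le_log_iff_exp_le ((Real.exp_pos _).trans_le hd)]
  exact hd

theorem sub_log_two_div_le_neg_log_div {d a k : ℝ} (hk : 0 < k) (hd0 : 0 < d)
    (hd : d ≤ 2 * Real.exp (-(a * k))) : a - Real.log 2 / k ≤ -Real.log d / k := by
  have hlog := Real.log_le_log hd0 hd
  rw [Real.log_mul two_ne_zero (Real.exp_ne_zero _), Real.log_exp] at hlog
  rw [le_div_iff₀ hk, sub_mul, div_mul_cancel₀ _ hk.ne']
  linarith

section ResonanceStrength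

variable {α x : ℝ} {a b : ℕ → ℝ} {δ : ℝ≥0∞} {order : ℕ → ℕ}

theorem resStrength_eq_limsup (hx : ∀ j : ℤ, 0 < distZ (x - j * α)) :
    resStrength α x = limsup
      (fun k : ℤ => ENNReal.ofReal (-Real.log (distZ (x - k * α)) / |(k : ℝ)|)) cofinite := by
  refine if_neg ?_
  rintro ⟨k, m, rfl⟩
  exact (hx k).ne' (distZ_eq_zero_iff.2 ⟨m, add_sub_cancel_left _ _⟩)

theorem resStrength_le (hx : ∀ j : ℤ, 0 < distZ (x - j * α)) (horder : ∀ n, n ≤ order n)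
    (hb : Tendsto (fun n => ENNReal.ofReal (b n)) atTop (nhds δ))
    (hfar : ∀ n, ∀ j : ℤ, order n ≤ |j| → |j| < order (n + 1) →
      Real.exp (-(b n * |(j : ℝ)|)) ≤ distZ (x - j * α)) :
    resStrength α x ≤ δ := by
  rw [resStrength_eq_limsup hx]
  refine le_of_forall_gt_imp_ge_of_dense fun c hc => ?_
  obtain ⟨N, hN⟩ := eventually_atTop.1 (hb.eventually_lt_const hc)
  refine limsup_le_of_le (h := int_eventually_cofinite_iff.2 ⟨order N + 1, fun j hj => ?_⟩)
  have hex : ∃ i, |j| < order (N + i) := by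
    refine ⟨j.natAbs + 1, ?_⟩
    have := horder (N + (j.natAbs + 1))
    rw [Int.abs_eq_natAbs]
    omega
  have hpos : Nat.find hex ≠ 0 := by
    refine fun h0 => (Nat.find_eq_zero hex).1 h0 |>.not_ge ?_
    push_cast at hj
    exact (lt_add_one _).le.trans hj
  obtain ⟨i, hi⟩ := Nat.exists_eq_succ_of_ne_zero hpos
  have hlt : |j| < order (N + i + 1) := by
    rw [add_assoc, ← Nat.succ_eq_add_one i, ← hi]
    exact Nat.find_spec hex
  have hle : order (N + i) ≤ |j| := not_lt.1 (Nat.find_min hex (hi ▸ Nat.lt_succ_self i))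
  have hj0 : 0 < |(j : ℝ)| := by
    have : 0 < |j| := by push_cast at hj; omega
    exact_mod_cast this
  exact (ENNReal.ofReal_le_ofReal (neg_log_div_le hj0 (hfar _ j hle hlt))).trans
    (hN _ le_self_add).le

theorem le_resStrength (hx : ∀ j : ℤ, 0 < distZ (x - j * α)) (horder : ∀ n, n ≤ order n)
    (ha : Tendsto (fun n => ENNReal.ofReal (a n)) atTop (nhds δ))
    (hnear : ∀ n, ∃ j : ℤ, |j| = order (n + 1) ∧
      distZ (x - j * α) ≤ 2 * Real.exp (-(a n * order (n + 1)))) :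
    δ ≤ resStrength α x := by
  rw [resStrength_eq_limsup hx]
  choose j hj hjx using hnear
  have hjtop : Tendsto j atTop cofinite := by
    intro s hs
    obtain ⟨L, hL⟩ := int_eventually_cofinite_iff.1 hs
    refine (eventually_ge_atTop L).mono fun n hn => hL _ ?_
    have := horder (n + 1)
    rw [hj]
    omega
  have horder' : Tendsto (fun n => (order (n + 1) : ℝ)) atTop atTop :=
    tendsto_natCast_atTop_atTop.comp
      (tendsto_atTop_mono (fun n => (Nat.le_succ n).trans (horder (n + 1))) tendsto_id)
  have hlim : Tendsto (fun n => ENNReal.ofReal (a n - Real.log 2 / order (n + 1)))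
      atTop (nhds δ) := by
    simp only [ENNReal.ofReal_sub _
      (div_nonneg (Real.log_nonneg one_le_two) (Nat.cast_nonneg _))]
    simpa only [ENNReal.ofReal_zero, tsub_zero] using ENNReal.Tendsto.sub ha
      (ENNReal.tendsto_ofReal (horder'.const_div_atTop (Real.log 2)))
      (Or.inr (by simp only [ENNReal.ofReal_zero, ne_eq, ENNReal.zero_ne_top, not_false_eq_true]))
  refine le_of_forall_lt_imp_le_of_dense fun c hc => le_limsup_of_frequently_le
    (hjtop.frequently (hlim.eventually_const_lt hc |>.mono fun n hn => ?_).frequently)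
  have hjn : |(j n : ℝ)| = order (n + 1) := by exact_mod_cast hj n
  have hpos : (0 : ℝ) < order (n + 1) := by
    exact_mod_cast (Nat.succ_pos n).trans_le (horder (n + 1))
  rw [hjn]
  exact hn.le.trans (ENNReal.ofReal_le_ofReal
    (sub_log_two_div_le_neg_log_div hpos (hx _) (hjx n)))

theorem resStrength_eq (horder : ∀ n, n ≤ order n)
    (ha : Tendsto (fun n => ENNReal.ofReal (a n)) atTop (nhds δ))
    (hb : Tendsto (fun n => ENNReal.ofReal (b n)) atTop (nhds δ))
    (h : ∀ n, IsResonantAt α (a n) (b n) (order n) (order (n + 1)) x) :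
    resStrength α x = δ := by
  have hx : ∀ j : ℤ, 0 < distZ (x - j * α) := fun j =>
    (h j.natAbs).pos j (by have := horder (j.natAbs + 1); rw [Int.abs_eq_natAbs]; omega)
  exact le_antisymm (resStrength_le hx horder hb fun n => (h n).far)
    (le_resStrength hx horder ha fun n => (h n).near)

end ResonanceStrength

/-! ### Points near a multiple of `α` are resonant at its order -/

section Near

variable {α A B γ x y : ℝ} {r : ℚ} {k m : ℤ}

theorem exp_neg_mul_le_pow_four {t : ℝ} (hγ : 4 * γ ≤ B) (ht : 0 ≤ t) :
    Real.exp (-(B * t)) ≤ Real.exp (-(γ * t)) ^ 4 := by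
  rw [← Real.exp_nat_mul]
  apply Real.exp_le_exp.2
  push_cast
  nlinarith

theorem exp_neg_mul_le_one_div_pow_four {q : ℕ} (hγ : 4 * γ ≤ A)
    (hk : 2 * Real.exp (-(γ * |(k : ℝ)|)) ≤ distZ (x - k * α))
    (hx : |x - (k * α + m)| ≤ 1 / q) : Real.exp (-(A * |(k : ℝ)|)) ≤ 1 / (q : ℝ) ^ 4 := by
  have hle : Real.exp (-(γ * |(k : ℝ)|)) ≤ 1 / q := by
    linarith [Real.exp_pos (-(γ * |(k : ℝ)|)), distZ_sub_le_abs_sub_add x (k * α) m]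
  refine (exp_neg_mul_le_pow_four hγ (abs_nonneg _)).trans ?_
  rw [← one_div_pow]
  gcongr

theorem one_div_sq_sub_le_distZ_sub (hr : |α - r| < 1 / (r.den : ℝ) ^ 2) (hk : 2 * |k| ≤ r.den)
    {j : ℤ} (hj : |j| < |k|) (m : ℤ) (y : ℝ) :
    1 / (r.den : ℝ) ^ 2 - |y - (k * α + m)| ≤ distZ (y - j * α) := by
  have hsep := one_div_den_sq_le_distZ_mul hr (n := k - j)
    (sub_ne_zero.2 fun h => hj.ne (h ▸ rfl)) ((abs_sub _ _).trans_lt (by omega))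
  have htri := distZ_le_add_abs_sub ((k - j : ℤ) * α + m) (y - j * α)
  rw [distZ_add_intCast, show ((k - j : ℤ) : ℝ) * α + m - (y - j * α) = -(y - (k * α + m)) by
    push_cast; ring, abs_neg] at htri
  linarith

/-- Below the cutoff order `L` the point `y` inherits its distances from the nonresonant point `x`;
above it, either `x` is far enough to be decisive, or `exp (-B |j|)` is much smaller than the
separation `1 / q ^ 2` of the orbit. -/
theorem exp_neg_le_distZ_of_near {K L : ℕ} {j : ℤ} (hr : |α - r| < 1 / (r.den : ℝ) ^ 2)
    (hγ : 0 ≤ γ) (hγB : 4 * γ ≤ B) (hden : 13 ≤ r.den)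
    (hdenL : 3 / r.den ≤ Real.exp (-(B * L))) (hk : 2 * |k| ≤ r.den)
    (hxB : x ∉ resonantSet α B K)
    (hxγ : ∀ j : ℤ, L ≤ |j| → 2 * Real.exp (-(γ * |(j : ℝ)|)) ≤ distZ (x - j * α))
    (hxy : |x - y| ≤ 3 / r.den) (hy : |y - (k * α + m)| ≤ 2 * (1 / (r.den : ℝ) ^ 4))
    (hKj : K ≤ |j|) (hjk : |j| < |k|) : Real.exp (-(B * |(j : ℝ)|)) ≤ distZ (y - j * α) := by
  have htri := distZ_le_add_abs_sub (x - j * α) (y - j * α)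
  rw [sub_sub_sub_cancel_right] at htri
  rcases lt_or_ge |j| L with hjL | hjL
  · have hfar : 2 * Real.exp (-(B * |(j : ℝ)|)) ≤ distZ (x - j * α) :=
      not_lt.1 fun h => hxB ⟨j, hKj, h⟩
    have hjL' : |(j : ℝ)| ≤ L := by exact_mod_cast hjL.le
    have hexp : Real.exp (-(B * L)) ≤ Real.exp (-(B * |(j : ℝ)|)) := by
      gcongr
      linarith
    linarith
  have hpow := exp_neg_mul_le_pow_four hγB (abs_nonneg (j : ℝ))
  rcases le_or_gt (3 / (r.den : ℝ)) (Real.exp (-(γ * |(j : ℝ)|))) with hlarge | hsmall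
  · have hBγ : Real.exp (-(B * |(j : ℝ)|)) ≤ Real.exp (-(γ * |(j : ℝ)|)) := by
      gcongr
      linarith
    linarith [hxγ j hjL]
  · have hden' : (13 : ℝ) ≤ r.den := by exact_mod_cast hden
    have hq : 83 * (1 / (r.den : ℝ) ^ 4) ≤ 1 / (r.den : ℝ) ^ 2 := by
      field_simp
      nlinarith
    calc Real.exp (-(B * |(j : ℝ)|)) ≤ (3 / r.den) ^ 4 := hpow.trans (by gcongr)
      _ = 83 * (1 / (r.den : ℝ) ^ 4) - 2 * (1 / (r.den : ℝ) ^ 4) := by ring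
      _ ≤ distZ (y - j * α) := by linarith [one_div_sq_sub_le_distZ_sub hr hk hjk m y]

theorem isResonantAt_of_near {K L : ℕ} (hr : |α - r| < 1 / (r.den : ℝ) ^ 2) (hγ : 0 ≤ γ)
    (hγA : 4 * γ ≤ A) (hγB : 4 * γ ≤ B) (hden : 13 ≤ r.den)
    (hdenL : 3 / r.den ≤ Real.exp (-(B * L))) (hk : 2 * |k| ≤ r.den) (hkL : L ≤ |k|)
    (hx : |x - (k * α + m)| ≤ 1 / r.den) (hxB : x ∉ resonantSet α B K)
    (hxγ : ∀ j : ℤ, L ≤ |j| → 2 * Real.exp (-(γ * |(j : ℝ)|)) ≤ distZ (x - j * α))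
    (hy : |y - (k * α + m)| ≤ 2 * Real.exp (-(A * |(k : ℝ)|))) :
    IsResonantAt α A B K k.natAbs y := by
  have hcast : ((k.natAbs : ℕ) : ℝ) = |(k : ℝ)| := by rw [Nat.cast_natAbs, Int.cast_abs]
  have hden' : (13 : ℝ) ≤ r.den := by exact_mod_cast hden
  have hy4 : |y - (k * α + m)| ≤ 2 * (1 / (r.den : ℝ) ^ 4) :=
    hy.trans (by linarith [exp_neg_mul_le_one_div_pow_four hγA (hxγ k hkL) hx])
  have hq4 : 1 / (r.den : ℝ) ^ 4 ≤ 1 / r.den := by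
    gcongr
    exact le_self_pow₀ (by linarith) (by norm_num)
  have hxy : |x - y| ≤ 3 / r.den := by
    have htri := abs_sub (x - (k * α + m)) (y - (k * α + m))
    rw [sub_sub_sub_cancel_right] at htri
    have hthree : (3 : ℝ) / r.den = 1 / r.den + 2 * (1 / r.den) := by ring
    linarith
  refine ⟨⟨k, Int.abs_eq_natAbs k, ?_⟩, fun j hj => ?_, fun j hKj hj => ?_⟩
  · rw [hcast]
    exact (distZ_sub_le_abs_sub_add y _ m).trans hy
  · rw [← Int.abs_eq_natAbs] at hj
    have hq : 2 * (1 / (r.den : ℝ) ^ 4) < 1 / (r.den : ℝ) ^ 2 := by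
      field_simp
      nlinarith
    linarith [one_div_sq_sub_le_distZ_sub hr hk hj m y]
  · rw [← Int.abs_eq_natAbs] at hj
    exact exp_neg_le_distZ_of_near hr hγ hγB hden hdenL hk hxB hxγ hxy hy4 hKj hj

end Near

/-! ### Admissible seeds -/

theorem exists_finset_pairwiseDisjoint_lt_sum_measure {X ι : Type*} [PseudoMetricSpace X]
    [MeasurableSpace X] [OpensMeasurableSpace X] [SecondCountableTopology X] {μ : Measure X}
    [IsLocallyFiniteMeasure μ] {s : Set X} {t : Set ι} {C : ℝ≥0} {r : ι → ℝ} {c : ι → X}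
    {B : ι → Set X} (hB : ∀ a ∈ t, B a ⊆ Metric.closedBall (c a) (r a))
    (hμB : ∀ a ∈ t, μ (Metric.closedBall (c a) (3 * r a)) ≤ C * μ (B a))
    (hint : ∀ a ∈ t, (interior (B a)).Nonempty) (hclosed : ∀ a ∈ t, IsClosed (B a))
    (hfine : ∀ x ∈ s, ∀ ε > 0, ∃ a ∈ t, r a ≤ ε ∧ c a = x) {m : ℝ≥0∞} (hm : m < μ s) :
    ∃ F : Finset ι, (∀ a ∈ F, a ∈ t) ∧ (F : Set ι).PairwiseDisjoint B ∧
      m < ∑ a ∈ F, μ (B a) := by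
  obtain ⟨u, hut, hu, hdisj, hnull⟩ :=
    Vitali.exists_disjoint_covering_ae μ s t C r c B hB hμB hint hclosed hfine
  have hle : μ s ≤ ∑' a : u, μ (B a) :=
    calc μ s ≤ μ (⋃ a ∈ u, B a) := measure_mono_ae (ae_le_set.2 hnull)
      _ ≤ _ := measure_biUnion_le μ hu _
  have hlt := hm.trans_le hle
  rw [ENNReal.tsum_eq_iSup_sum, lt_iSup_iff] at hlt
  obtain ⟨F, hF⟩ := hlt
  refine ⟨F.map (Function.Embedding.subtype _), fun a ha => ?_, ?_, by rwa [Finset.sum_map]⟩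
  · obtain ⟨b, -, rfl⟩ := Finset.mem_map.1 ha
    exact hut b.2
  · refine hdisj.subset fun a ha => ?_
    obtain ⟨b, -, rfl⟩ := Finset.mem_map.1 (Finset.mem_coe.1 ha)
    exact b.2

/-- The data of a ball in the covering that produces the children of a node: a generic point `x`,
a denominator `q` of a good rational approximation of `α`, and an orbit point `k α + m` near `x`. -/
structure Seed where
  x : ℝ
  q : ℕ
  k : ℤ
  m : ℤ

namespace Seed

/-- The orbit point of a seed. -/
def center (α : ℝ) (a : Seed) : ℝ := a.k * α + a.m

/-- The ball of radius `η / q` around the orbit point; a child is placed inside it. -/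
def ball (α η : ℝ) (a : Seed) : Set ℝ := Metric.closedBall (a.center α) (η / a.q)

/-- The length of the child placed at the orbit point of a seed. -/
noncomputable def width (A : ℝ) (a : Seed) : ℝ := Real.exp (-(A * a.k.natAbs))

/-- A seed whose ball lies in `I`, whose order is at least `N`, and for which all points close to
the orbit point are resonant at order `|k|`. -/
structure IsAdmissible (α A B η : ℝ) (I : Set ℝ) (K N : ℕ) (a : Seed) : Prop where
  q_pos : 0 < a.q
  near : |a.x - a.center α| ≤ 1 / a.q
  two_mul_abs_le : 2 * |a.k| ≤ a.q
  ball_subset : a.ball α η ⊆ I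
  le_natAbs : N ≤ a.k.natAbs
  width_le : 2 * a.width A ≤ η / (2 * a.q)
  isResonantAt : ∀ y, |y - a.center α| ≤ 2 * a.width A → IsResonantAt α A B K a.k.natAbs y

variable {α A B η x : ℝ} {I : Set ℝ} {K N : ℕ}

theorem volume_ball (α η : ℝ) (a : Seed) :
    volume (a.ball α η) = ENNReal.ofReal (2 * (η / a.q)) := Real.volume_closedBall _ _

theorem width_eq (A : ℝ) (a : Seed) : a.width A = Real.exp (-(A * |(a.k : ℝ)|)) := by
  rw [width, Nat.cast_natAbs, Int.cast_abs]

theorem Icc_subset_ball {a : Seed} (h : 2 * a.width A ≤ η / (2 * a.q)) :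
    Icc (a.center α + a.width A - η / (2 * a.q))
      (a.center α + a.width A + a.width A + η / (2 * a.q)) ⊆ a.ball α η := by
  have hhalf : η / a.q = 2 * (η / (2 * a.q)) := by ring
  have hpos : 0 < a.width A := Real.exp_pos _
  rw [ball, Real.closedBall_eq_Icc]
  apply Icc_subset_Icc <;> linarith

theorem eventually_forall_near_le_natAbs (hx : ∀ j : ℤ, 0 < distZ (x - j * α)) (L : ℕ) :
    ∀ᶠ q : ℕ in atTop, ∀ k m : ℤ, |x - (k * α + m)| ≤ 1 / q → L ≤ k.natAbs := by
  have hfar : ∀ᶠ q : ℕ in atTop, ∀ k ∈ Finset.Ioo (-(L : ℤ)) L,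
      1 / (q : ℝ) < distZ (x - k * α) :=
    (Filter.eventually_all_finset _).2 fun k _ =>
      (tendsto_const_div_atTop_nhds_zero_nat 1).eventually_lt_const (hx k)
  filter_upwards [hfar] with q hq k m hkm
  by_contra! hk
  exact (hq k (Finset.mem_Ioo.2 (by omega))).not_ge ((distZ_sub_le_abs_sub_add x _ m).trans hkm)

theorem closedBall_div_subset {c q : ℝ} (hη : η ≤ 1) (hq : 0 < q) (hx : |x - c| ≤ 1 / q) :
    Metric.closedBall c (η / q) ⊆ Metric.closedBall x (2 / q) := by
  apply Metric.closedBall_subset_closedBall'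
  rw [dist_comm, Real.dist_eq]
  calc η / q + |x - c| ≤ 1 / q + 1 / q := by gcongr
    _ = 2 / q := by ring

theorem two_mul_exp_neg_le {q : ℕ} {t : ℝ} (hη : 0 < η) (hq : 1 ≤ q) (hqη : 4 / η ≤ q)
    (h : Real.exp (-t) ≤ 1 / (q : ℝ) ^ 4) : 2 * Real.exp (-t) ≤ η / (2 * q) := by
  have hq' : (1 : ℝ) ≤ q := by exact_mod_cast hq
  have hqη' : 4 ≤ q * η := (div_le_iff₀ hη).1 hqη
  calc 2 * Real.exp (-t) ≤ 2 * (1 / (q : ℝ) ^ 2) := by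
        gcongr
        exact h.trans (one_div_le_one_div_of_le (by positivity)
          (pow_le_pow_right₀ hq' (by norm_num)))
    _ ≤ η / (2 * q) := by
        rw [mul_one_div, div_le_div_iff₀ (by positivity) (by positivity)]
        nlinarith

theorem exists_isAdmissible (hα : Irrational α) (hA : 0 < A) (hB : 0 < B) (hη : 0 < η)
    (hη1 : η ≤ 1) (N : ℕ) (hxI : x ∈ interior I) (hxB : x ∉ resonantSet α B K)
    (hx0 : ∀ j : ℤ, 0 < distZ (x - j * α))
    (hxγ : ∀ᶠ j : ℤ in cofinite,
      2 * Real.exp (-(min A B / 4 * |(j : ℝ)|)) ≤ distZ (x - j * α)) {e : ℝ} (he : 0 < e) :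
    ∃ a : Seed, a.IsAdmissible α A B η I K N ∧ 2 / (a.q : ℝ) ≤ e ∧ a.x = x := by
  obtain ⟨L, hL⟩ := int_eventually_cofinite_iff.1 hxγ
  obtain ⟨d, hd, hdI⟩ := Metric.mem_nhds_iff.1 (mem_interior_iff_mem_nhds.1 hxI)
  have hγA : 4 * (min A B / 4) ≤ A := by linarith [min_le_left A B]
  have hγB : 4 * (min A B / 4) ≤ B := by linarith [min_le_right A B]
  have hdiv (c : ℝ) {b : ℝ} (hb : 0 < b) : ∀ᶠ q : ℕ in atTop, c / (q : ℝ) < b :=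
    (tendsto_const_div_atTop_nhds_zero_nat c).eventually_lt_const hb
  have hlarge : ∀ᶠ q : ℕ in atTop, 13 ≤ q ∧ 4 / η ≤ q := (eventually_ge_atTop 13).and
    (tendsto_natCast_atTop_atTop.eventually_ge_atTop _)
  obtain ⟨Q, hQ⟩ := eventually_atTop.1 (hlarge.and
    ((eventually_forall_near_le_natAbs hx0 (max L N)).and ((hdiv 2 hd).and
      ((hdiv 2 he).and (hdiv 3 (Real.exp_pos (-(B * L))))))))
  obtain ⟨r, hr, hαr⟩ := exists_rat_le_den_abs_sub_lt hα Q
  obtain ⟨⟨h13, hqη⟩, hfar, hqd, hqe, hqL⟩ := hQ r.den hr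
  obtain ⟨k, m, hk, hkm⟩ := exists_orbit_point_abs_sub_le hαr x
  have hkL : (L : ℤ) ≤ |k| := by
    rw [Int.abs_eq_natAbs]
    exact_mod_cast (le_max_left _ _).trans (hfar k m hkm)
  have hden : (0 : ℝ) < r.den := by exact_mod_cast r.den_pos
  refine ⟨⟨x, r.den, k, m⟩, ⟨r.den_pos, hkm, hk, ?_, (le_max_right _ _).trans (hfar k m hkm),
    ?_, fun y hy => ?_⟩, hqe.le, rfl⟩
  · exact (closedBall_div_subset hη1 hden hkm).trans
      ((Metric.closedBall_subset_ball hqd).trans hdI)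
  · rw [width_eq]
    exact two_mul_exp_neg_le hη r.den_pos hqη
      (exp_neg_mul_le_one_div_pow_four hγA (hL k hkL) hkm)
  · have hγ : 0 ≤ min A B / 4 := by positivity
    rw [width_eq] at hy
    exact isResonantAt_of_near hαr hγ hγA hγB h13 hqL.le hk hkL hkm hxB hL hy

theorem exists_finset_isAdmissible (hα : Irrational α) (hA : 0 < A) (hB : 0 < B) (hη : 0 < η)
    (hη1 : η ≤ 1) (N : ℕ) (hI : I ⊆ Icc 0 1) {m : ℝ≥0∞}
    (hm : m < volume (interior I \ resonantSet α B K)) :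
    ∃ F : Finset Seed, (∀ a ∈ F, a.IsAdmissible α A B η I K N) ∧
      (F : Set Seed).PairwiseDisjoint (ball α η) ∧
      m < ∑ a ∈ F, volume (a.ball α η) := by
  set generic : Set ℝ := {x | (∀ j : ℤ, 0 < distZ (x - j * α)) ∧ ∀ᶠ j : ℤ in cofinite,
    2 * Real.exp (-(min A B / 4 * |(j : ℝ)|)) ≤ distZ (x - j * α)}
  have hgeneric : ∀ᵐ x ∂volume, x ∈ Icc (0 : ℝ) 1 → x ∈ generic := by
    have hγ : 0 < min A B / 4 := by positivity
    filter_upwards [ae_forall_distZ_sub_pos α,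
      (ae_restrict_iff' measurableSet_Icc).1 (ae_eventually_le_distZ_sub α hγ)] with x h0 h hx
    exact ⟨h0, h hx⟩
  have hm' : m < volume ((interior I \ resonantSet α B K) ∩ generic) :=
    hm.trans_le (measure_mono_ae (hgeneric.mono fun x hx hxI =>
      ⟨hxI, hx (hI (interior_subset hxI.1))⟩))
  refine exists_finset_pairwiseDisjoint_lt_sum_measure (c := x) (r := fun a => 2 / (a.q : ℝ))
    (C := Real.toNNReal (6 / η)) (t := {a | a.IsAdmissible α A B η I K N}) (fun a ha => ?_)
    (fun a ha => ?_) (fun a ha => ?_) (fun a _ => Metric.isClosed_closedBall) ?_ hm'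
  · exact closedBall_div_subset hη1 (by exact_mod_cast ha.q_pos) ha.near
  · have hq : (0 : ℝ) < a.q := by exact_mod_cast ha.q_pos
    rw [Real.volume_closedBall, Real.volume_closedBall, ENNReal.ofNNReal_toNNReal,
      ← ENNReal.ofReal_mul (by positivity)]
    refine ENNReal.ofReal_le_ofReal (le_of_eq ?_)
    field_simp
    norm_num
  · have hq : (0 : ℝ) < a.q := by exact_mod_cast ha.q_pos
    exact (Metric.nonempty_ball.2 (div_pos hη hq)).mono Metric.ball_subset_interior_closedBall
  · exact fun y hy e he => exists_isAdmissible hα hA hB hη hη1 N hy.1.1 hy.1.2 hy.2.1 hy.2.2 he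

end Seed

/-! ### Nodes of the Cantor construction -/

/-- A node of the Cantor construction: an interval `[left, left + len]`, surrounded by a gap of
width `buffer` on either side, that carries mass `mass`. The points of a child are resonant at its
`order` (see `IsChild`), and few of them are `B depth`-close to a multiple of `α` of at least that
order. -/
structure CantorNode (α : ℝ) (B : ℕ → ℝ) where
  depth : ℕ
  order : ℕ
  left : ℝ
  len : ℝ
  buffer : ℝ
  mass : ℝ
  len_pos : 0 < len
  len_le_buffer : len ≤ buffer
  mass_pos : 0 < mass
  core_subset_unit : Icc left (left + len) ⊆ Icc 0 1
  volume_resonantSet_le :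
    volume (Icc 0 1 ∩ resonantSet α (B depth) order) ≤ ENNReal.ofReal (len / 2)
  depth_le_order : depth ≤ order
  len_le_exp : len ≤ Real.exp (-depth)

namespace CantorNode

variable {α ε : ℝ} {A B : ℕ → ℝ} {u v : CantorNode α B}

/-- The interval of a node, in which its children are placed. -/
def core (v : CantorNode α B) : Set ℝ := Icc v.left (v.left + v.len)

/-- The interval of a node together with its buffers; siblings have disjoint hulls. -/
def hull (v : CantorNode α B) : Set ℝ := Icc (v.left - v.buffer) (v.left + v.len + v.buffer)

/-- The node `u` is suitable as a child of `v`. The field `mass_mul_log_le` is what makes the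
logarithmic mass estimate hold with an arbitrarily small constant `ε`. -/
structure IsChild (A : ℕ → ℝ) (ε : ℝ) (v u : CantorNode α B) : Prop where
  depth_eq : u.depth = v.depth + 1
  hull_subset_core : u.hull ⊆ v.core
  mass_le : u.mass ≤ 16 * v.mass * u.buffer / v.len
  mass_mul_log_le : u.mass * -Real.log u.len ≤ ε
  isResonantAt : ∀ y ∈ u.core,
    IsResonantAt α (A (v.depth + 1)) (B v.depth) v.order u.order y

theorem buffer_pos (v : CantorNode α B) : 0 < v.buffer := v.len_pos.trans_le v.len_le_buffer

theorem core_subset_hull (v : CantorNode α B) : v.core ⊆ v.hull :=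
  Icc_subset_Icc (by linarith [v.buffer_pos]) (by linarith [v.buffer_pos])

theorem hull_nonempty (v : CantorNode α B) : v.hull.Nonempty :=
  nonempty_Icc.2 (by linarith [v.len_pos, v.buffer_pos])

theorem lt_volume_interior_core_sdiff (v : CantorNode α B) :
    ENNReal.ofReal (v.len / 4) <
      volume (interior v.core \ resonantSet α (B v.depth) v.order) := by
  have hle : ENNReal.ofReal v.len ≤ volume (interior v.core \ resonantSet α (B v.depth) v.order) +
      ENNReal.ofReal (v.len / 2) :=
    calc ENNReal.ofReal v.len = volume (interior v.core) := by
          rw [core, interior_Icc, Real.volume_Ioo, add_sub_cancel_left]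
      _ ≤ volume ((interior v.core \ resonantSet α (B v.depth) v.order) ∪
          (Icc 0 1 ∩ resonantSet α (B v.depth) v.order)) := by
          refine measure_mono fun y hy => ?_
          by_cases h : y ∈ resonantSet α (B v.depth) v.order
          exacts [Or.inr ⟨v.core_subset_unit (interior_subset hy), h⟩, Or.inl ⟨hy, h⟩]
      _ ≤ _ := (measure_union_le _ _).trans (add_le_add le_rfl v.volume_resonantSet_le)
  by_contra! h
  have hlen := v.len_pos
  have hle' := hle.trans (add_le_add h le_rfl)
  rw [← ENNReal.ofReal_add (by positivity) (by positivity),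
    ENNReal.ofReal_le_ofReal_iff (by positivity)] at hle'
  linarith

theorem eventually_order_admissible (v : CantorNode α B) {a b : ℝ} (ha : 0 < a) (hab : a < b) :
    ∀ᶠ k : ℕ in atTop, v.depth + 1 ≤ k ∧ v.depth + 1 ≤ a * k ∧
      volume (Icc 0 1 ∩ resonantSet α b k) ≤ ENNReal.ofReal (1 / 2 * Real.exp (-(a * k))) :=
  (eventually_ge_atTop _).and (((tendsto_natCast_atTop_atTop.const_mul_atTop
    ha).eventually_ge_atTop _).and (eventually_volume_resonantSet_le α ha.le hab one_half_pos))

theorem exists_isChild_of_isAdmissible {a : Seed} {η total : ℝ} {N : ℕ} (hη : 0 < η)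
    (hA : 0 < A (v.depth + 1))
    (ha : a.IsAdmissible α (A (v.depth + 1)) (B v.depth) η v.core v.order N)
    (hηε : 4 * v.mass * A (v.depth + 1) * η ≤ ε * v.len) (htotal : v.len / 16 < total)
    (hN : ∀ k ≥ N, v.depth + 1 ≤ k ∧ v.depth + 1 ≤ A (v.depth + 1) * k ∧
      volume (Icc 0 1 ∩ resonantSet α (B (v.depth + 1)) k) ≤
        ENNReal.ofReal (1 / 2 * Real.exp (-(A (v.depth + 1) * k)))) :
    ∃ u : CantorNode α B, IsChild A ε v u ∧ u.hull ⊆ a.ball α η ∧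
      u.mass = v.mass / total * (η / (2 * a.q)) := by
  have hq : (0 : ℝ) < a.q := by exact_mod_cast ha.q_pos
  have hlen := v.len_pos
  have hmass := v.mass_pos
  have htotal_pos : 0 < total := (by positivity : 0 < v.len / 16).trans htotal
  obtain ⟨hdepth, hexp, hvol⟩ := hN _ ha.le_natAbs
  have hs_pos : 0 < a.width (A (v.depth + 1)) := Real.exp_pos _
  have hs_le := ha.width_le
  have hball := Seed.Icc_subset_ball (α := α) hs_le
  have hmass_le : v.mass / total * (η / (2 * a.q)) ≤ 16 * v.mass * (η / (2 * a.q)) / v.len := by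
    rw [div_mul_eq_mul_div, div_le_div_iff₀ htotal_pos hlen]
    have : 0 < v.mass * (η / (2 * a.q)) := by positivity
    nlinarith
  refine ⟨{ depth := v.depth + 1, order := a.k.natAbs, buffer := η / (2 * a.q)
            left := a.center α + a.width (A (v.depth + 1)), len := a.width (A (v.depth + 1))
            mass := v.mass / total * (η / (2 * a.q))
            len_pos := hs_pos
            len_le_buffer := by linarith
            mass_pos := by positivity
            core_subset_unit := fun y hy => v.core_subset_unit (ha.ball_subset (hball
              ⟨by linarith [hy.1], by linarith [hy.2]⟩))
            volume_resonantSet_le := by rwa [div_eq_inv_mul, ← one_div]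
            depth_le_order := hdepth
            len_le_exp := Real.exp_le_exp.2 (by push_cast; linarith) },
    ⟨rfl, hball.trans ha.ball_subset, hmass_le, ?_, fun y hy => ha.isResonantAt y
      (abs_le.2 ⟨by linarith [hy.1, hs_pos], by linarith [hy.2]⟩)⟩, hball, rfl⟩
  have hk : (a.k.natAbs : ℝ) ≤ a.q / 2 := by
    rw [Nat.cast_natAbs, Int.cast_abs, le_div_iff₀' two_pos]
    exact_mod_cast ha.two_mul_abs_le
  dsimp only
  rw [Seed.width, Real.log_exp, neg_neg]
  calc v.mass / total * (η / (2 * a.q)) * (A (v.depth + 1) * a.k.natAbs)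
      ≤ 16 * v.mass * (η / (2 * a.q)) / v.len * (A (v.depth + 1) * (a.q / 2)) := by gcongr
    _ = 4 * v.mass * A (v.depth + 1) * η / v.len := by field_simp; norm_num
    _ ≤ ε := by rwa [div_le_iff₀ hlen]

theorem exists_children (hα : Irrational α) (hA : ∀ n, 0 < A n) (hAB : ∀ n, A n < B n)
    (hε : 0 < ε) (v : CantorNode α B) :
    ∃ F : Finset (CantorNode α B), (F : Set (CantorNode α B)).PairwiseDisjoint hull ∧
      ∑ u ∈ F, u.mass = v.mass ∧ ∀ u ∈ F, IsChild A ε v u := by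
  have hlen := v.len_pos
  have hmass := v.mass_pos
  have hA' := hA (v.depth + 1)
  obtain ⟨N, hN⟩ := eventually_atTop.1 (v.eventually_order_admissible hA' (hAB _))
  obtain ⟨η, hη, hη1, hηε⟩ : ∃ η > 0, η ≤ 1 ∧ 4 * v.mass * A (v.depth + 1) * η ≤ ε * v.len := by
    refine ⟨min 1 (ε * v.len / (4 * v.mass * A (v.depth + 1))), by positivity, min_le_left _ _, ?_⟩
    rw [← le_div_iff₀' (by positivity)]
    exact min_le_right _ _
  obtain ⟨s, hs, hdisj, hsum⟩ := Seed.exists_finset_isAdmissible hα hA' ((hA _).trans (hAB v.depth))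
    hη hη1 N v.core_subset_unit v.lt_volume_interior_core_sdiff
  set total := ∑ a ∈ s, η / (2 * (a.q : ℝ)) with htotal_def
  have htotal : v.len / 16 < total := by
    have hfour : ∀ a : Seed, 2 * (η / (a.q : ℝ)) = 4 * (η / (2 * a.q)) := fun a => by ring
    simp only [Seed.volume_ball, hfour] at hsum
    rw [← ENNReal.ofReal_sum_of_nonneg (fun a _ => by positivity), ← Finset.mul_sum] at hsum
    linarith [(ENNReal.ofReal_lt_ofReal_iff_of_nonneg (by positivity)).1 hsum]
  have : Nonempty (CantorNode α B) := ⟨v⟩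
  choose! node hchild hball hnode using fun a ha =>
    exists_isChild_of_isAdmissible hη hA' (hs a ha) hηε htotal hN
  have hhull : (s : Set Seed).PairwiseDisjoint (hull ∘ node) := hdisj.mono_on hball
  have hinj : InjOn node s := fun a ha b hb hab =>
    hhull.elim ha hb (by simp [hab, (node b).hull_nonempty.ne_empty])
  refine ⟨s.image node, ?_, ?_, Finset.forall_mem_image.2 hchild⟩
  · rwa [Finset.coe_image, hinj.pairwiseDisjoint_image]
  · rw [Finset.sum_image hinj, Finset.sum_congr rfl hnode, ← Finset.mul_sum, ← htotal_def,
      div_mul_cancel₀ _ (by linarith)]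

end CantorNode

/-! ### The Cantor set of resonant points -/

/-- A choice of children for every node, exhausting its mass. -/
structure IsCantorTree {α : ℝ} {B : ℕ → ℝ} (A : ℕ → ℝ) (ε : ℝ)
    (children : CantorNode α B → Finset (CantorNode α B)) : Prop where
  pairwiseDisjoint_hull : ∀ v, (children v : Set (CantorNode α B)).PairwiseDisjoint CantorNode.hull
  sum_mass : ∀ v, ∑ u ∈ children v, u.mass = v.mass
  isChild : ∀ v, ∀ u ∈ children v, CantorNode.IsChild A ε v u

theorem exists_isCantorTree {α ε : ℝ} {A B : ℕ → ℝ} (hα : Irrational α) (hA : ∀ n, 0 < A n)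
    (hAB : ∀ n, A n < B n) (hε : 0 < ε) :
    ∃ children : CantorNode α B → Finset (CantorNode α B), IsCantorTree A ε children := by
  choose children hdisj hsum hchild using CantorNode.exists_children (α := α) hα hA hAB hε
  exact ⟨children, hdisj, hsum, hchild⟩

namespace CantorNode

theorem exists_root (α : ℝ) {B : ℕ → ℝ} (hB : 0 < B 0) :
    ∃ v : CantorNode α B, v.depth = 0 ∧ v.mass = 1 := by
  obtain ⟨K, hK⟩ := (eventually_volume_resonantSet_le α le_rfl hB (one_half_pos (α := ℝ))).exists
  refine ⟨{ depth := 0, order := K, left := 0, len := 1, buffer := 1, mass := 1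
            len_pos := one_pos
            len_le_buffer := le_rfl
            mass_pos := one_pos
            core_subset_unit := by rw [zero_add]
            volume_resonantSet_le := by simpa using hK
            depth_le_order := K.zero_le
            len_le_exp := by simp }, rfl, rfl⟩

variable {α : ℝ} {B : ℕ → ℝ} {u : CantorNode α B} {x y : ℝ}

theorem mem_hull_of_abs_sub_le (hy : y ∈ u.core) (h : |y - x| ≤ u.buffer) : x ∈ u.hull := by
  have := abs_le.1 h
  exact ⟨by linarith [hy.1], by linarith [hy.2]⟩

theorem hull_subset_Icc {r : ℝ} (hr : u.buffer ≤ r) (hy : y ∈ u.core) (hyx : |y - x| ≤ r) :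
    u.hull ⊆ Icc (x - 3 * r) (x + 3 * r) := by
  have := abs_le.1 hyx
  have := u.len_le_buffer
  exact Icc_subset_Icc (by linarith [hy.2]) (by linarith [hy.1])

theorem sum_buffer_le {s : Finset (CantorNode α B)} {r : ℝ} (hr : 0 ≤ r)
    (hs : (s : Set (CantorNode α B)).PairwiseDisjoint hull)
    (hsub : ∀ u ∈ s, u.hull ⊆ Icc (x - 3 * r) (x + 3 * r)) : ∑ u ∈ s, u.buffer ≤ 3 * r := by
  have hvol (u : CantorNode α B) : 2 * u.buffer ≤ volume.real u.hull := by
    rw [hull, Real.volume_real_Icc_of_le (by linarith [u.len_pos, u.buffer_pos])]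
    linarith [u.len_pos]
  have hsum : ∑ u ∈ s, volume.real u.hull ≤ volume.real (Icc (x - 3 * r) (x + 3 * r)) := by
    rw [← measureReal_biUnion_finset hs (fun u _ => measurableSet_Icc)
      fun u _ => measure_Icc_lt_top.ne]
    exact measureReal_mono (iUnion₂_subset hsub) measure_Icc_lt_top.ne
  rw [Real.volume_real_Icc_of_le (by linarith)] at hsum
  have := (Finset.sum_le_sum fun u _ => hvol u).trans hsum
  rw [← Finset.mul_sum] at this
  linarith

end CantorNode

theorem mul_neg_log_le_mul_neg_log {r s : ℝ} (hr : 0 ≤ r) (hrs : r ≤ s)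
    (hs : s ≤ Real.exp (-1)) : r * -Real.log r ≤ s * -Real.log s := by
  have := Real.mul_log_strictAntiOn.antitoneOn ⟨hr, hrs.trans hs⟩ ⟨hr.trans hrs, hs⟩ hrs
  linarith

namespace IsCantorTree

variable {α ε : ℝ} {A B : ℕ → ℝ} {children : CantorNode α B → Finset (CantorNode α B)}
  {v₀ v u : CantorNode α B} {n : ℕ} {x r : ℝ}

theorem isMassTree (h : IsCantorTree A ε children) :
    IsMassTree CantorNode.hull (fun v => ENNReal.ofReal v.mass) children where
  isClosed_cell _ := isClosed_Icc
  nonempty_cell v := v.hull_nonempty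
  cell_subset v u hu := (h.isChild v u hu).hull_subset_core.trans v.core_subset_hull
  pairwiseDisjoint_cell := h.pairwiseDisjoint_hull
  sum_mass v := by
    rw [← h.sum_mass v, ENNReal.ofReal_sum_of_nonneg fun u _ => u.mass_pos.le]

theorem depth_of_mem_descendants (h : IsCantorTree A ε children)
    (hv : v ∈ descendants children v₀ n) : v.depth = v₀.depth + n := by
  induction n generalizing v with
  | zero => rw [Finset.mem_singleton.1 hv, add_zero]
  | succ n ih =>
    obtain ⟨w, hw, hv⟩ := mem_descendants_succ.1 hv
    rw [(h.isChild w v hv).depth_eq, ih hw, add_assoc]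

theorem limitSet_inter_hull_subset (h : IsCantorTree A ε children)
    (hv : v ∈ descendants children v₀ n) :
    limitSet CantorNode.hull children v₀ ∩ v.hull ⊆ ⋃ u ∈ children v, u.core := by
  intro x hx
  obtain ⟨u, hu, hxu⟩ := mem_iUnion₂.1 (h.isMassTree.limitSet_inter_cell_subset hv hx)
  obtain ⟨w, hw, hxw⟩ := mem_iUnion₂.1
    (h.isMassTree.limitSet_inter_cell_subset (mem_descendants_succ.2 ⟨v, hv, hu⟩) hxu)
  exact mem_biUnion hu ((h.isChild u w hw).hull_subset_core hxw.2)

theorem limitSet_subset_resSet {δ : ℝ≥0∞} (h : IsCantorTree A ε children) (hv₀ : v₀.depth = 0)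
    (hA : Tendsto (fun n => ENNReal.ofReal (A n)) atTop (nhds δ))
    (hB : Tendsto (fun n => ENNReal.ofReal (B n)) atTop (nhds δ)) :
    limitSet CantorNode.hull children v₀ ⊆ resSet α δ := by
  intro x hx
  obtain ⟨v, hv⟩ := h.isMassTree.exists_branch hx
  have hdepth (n : ℕ) : (v n).depth = n := by
    rw [h.depth_of_mem_descendants (hv n).1, hv₀, zero_add]
  have hcore (n : ℕ) : x ∈ (v n).core :=
    (h.isChild _ _ (hv n).2.1).hull_subset_core (hv (n + 1)).2.2
  refine ⟨(v 0).core_subset_unit (hcore 0), resStrength_eq (order := fun n => (v n).order)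
    (fun n => (hdepth n).symm.trans_le (v n).depth_le_order)
    (hA.comp (tendsto_add_atTop_nat 1)) hB fun n => ?_⟩
  have hres := (h.isChild _ _ (hv n).2.1).isResonantAt x (hcore (n + 1))
  rwa [hdepth] at hres

/-- The children of `v` whose core meets the ball of radius `r` around `x`. -/
noncomputable def visibleChildren (children : CantorNode α B → Finset (CantorNode α B))
    (v : CantorNode α B) (x r : ℝ) : Finset (CantorNode α B) :=
  {w ∈ children v | ∃ y ∈ w.core, |y - x| ≤ r}

theorem sum_mass_visibleChildren_le_mass (h : IsCantorTree A ε children) (hu : u ∈ children v)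
    (hx : x ∈ u.core) (hr : r ≤ u.buffer) :
    ∑ w ∈ visibleChildren children v x r, w.mass ≤ u.mass := by
  have hsub : visibleChildren children v x r ⊆ {u} := fun w hw => by
    obtain ⟨hwv, y, hy, hyx⟩ := Finset.mem_filter.1 hw
    have hyu : y ∈ u.hull := u.mem_hull_of_abs_sub_le hx (by rw [abs_sub_comm]; linarith)
    exact Finset.mem_singleton.2
      ((h.pairwiseDisjoint_hull v).elim_set hwv hu y (w.core_subset_hull hy) hyu)
  refine (Finset.sum_le_sum_of_subset_of_nonneg hsub fun w _ _ => w.mass_pos.le).trans ?_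
  rw [Finset.sum_singleton]

theorem sum_mass_visibleChildren_le_mul (h : IsCantorTree A ε children) (hu : u ∈ children v)
    (hx : x ∈ u.core) (hr : u.buffer ≤ r) :
    ∑ w ∈ visibleChildren children v x r, w.mass ≤ 48 * v.mass / v.len * r := by
  have hmass := v.mass_pos
  have hlen := v.len_pos
  have hsub : ∀ w ∈ visibleChildren children v x r, w.hull ⊆ Icc (x - 3 * r) (x + 3 * r) := by
    intro w hw
    obtain ⟨hwv, y, hy, hyx⟩ := Finset.mem_filter.1 hw
    refine w.hull_subset_Icc (le_of_not_gt fun hwr => hwr.not_ge ?_) hy hyx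
    have hxw : x ∈ w.hull := w.mem_hull_of_abs_sub_le hy (hyx.trans hwr.le)
    rwa [(h.pairwiseDisjoint_hull v).elim_set hwv hu x hxw (u.core_subset_hull hx)]
  have hbuffer := CantorNode.sum_buffer_le (u.buffer_pos.le.trans hr)
    ((h.pairwiseDisjoint_hull v).subset (Finset.filter_subset _ _)) hsub
  calc ∑ w ∈ visibleChildren children v x r, w.mass
      ≤ ∑ w ∈ visibleChildren children v x r, 16 * v.mass / v.len * w.buffer :=
        Finset.sum_le_sum fun w hw => by
          rw [div_mul_eq_mul_div]
          exact (h.isChild v w (Finset.mem_filter.1 hw).1).mass_le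
    _ ≤ 16 * v.mass / v.len * (3 * r) := by
        rw [← Finset.mul_sum]
        exact mul_le_mul_of_nonneg_left hbuffer (by positivity)
    _ = 48 * v.mass / v.len * r := by ring

theorem sum_mass_visibleChildren_mul_neg_log_le (h : IsCantorTree A ε children)
    (hv : v.mass * -Real.log v.len ≤ ε) (hlen : v.len ≤ Real.exp (-1)) (hu : u ∈ children v)
    (hx : x ∈ u.core) (hr : u.len < r) (hrv : r ≤ v.len) :
    (∑ w ∈ visibleChildren children v x r, w.mass) * -Real.log r ≤ 48 * ε := by
  have hr0 : 0 < r := u.len_pos.trans hr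
  have hlog : 0 ≤ -Real.log r := neg_nonneg.2 (Real.log_nonpos hr0.le
    ((hrv.trans hlen).trans (Real.exp_le_one_iff.2 (by norm_num))))
  rcases le_total r u.buffer with hru | hru
  · have hle : u.mass * -Real.log r ≤ ε := by
      refine le_trans ?_ (h.isChild v u hu).mass_mul_log_le
      have := u.mass_pos
      have := u.len_pos
      gcongr
    have hpos : 0 ≤ u.mass * -Real.log r := mul_nonneg u.mass_pos.le hlog
    calc _ ≤ u.mass * -Real.log r := by
          gcongr
          exact h.sum_mass_visibleChildren_le_mass hu hx hru
      _ ≤ 48 * ε := by linarith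
  · have hmass := v.mass_pos
    have hvlen := v.len_pos
    calc _ ≤ 48 * v.mass / v.len * r * -Real.log r := by
          gcongr
          exact h.sum_mass_visibleChildren_le_mul hu hx hru
      _ ≤ 48 * v.mass / v.len * (v.len * -Real.log v.len) := by
          rw [mul_assoc]
          exact mul_le_mul_of_nonneg_left (mul_neg_log_le_mul_neg_log hr0.le hrv hlen)
            (by positivity)
      _ = 48 * (v.mass * -Real.log v.len) := by field_simp
      _ ≤ 48 * ε := by gcongr

theorem exists_lt_len_le_len {v : ℕ → CantorNode α B} (hdepth : ∀ n, n ≤ (v n).depth)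
    (hr : 0 < r) (hr1 : r ≤ (v 1).len) : ∃ n, (v (n + 2)).len < r ∧ r ≤ (v (n + 1)).len := by
  have hlim : Tendsto (fun n => (v n).len) atTop (nhds 0) := by
    refine squeeze_zero (fun n => (v n).len_pos.le) (fun n => (v n).len_le_exp.trans ?_)
      (Real.tendsto_exp_neg_atTop_nhds_zero.comp tendsto_natCast_atTop_atTop)
    exact Real.exp_le_exp.2 (neg_le_neg (by exact_mod_cast hdepth n))
  have hex : ∃ n, (v (n + 1)).len < r :=
    ((tendsto_add_atTop_iff_nat 1).2 hlim |>.eventually_lt_const hr).exists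
  obtain ⟨n, hn⟩ : ∃ n, Nat.find hex = n + 1 :=
    Nat.exists_eq_succ_of_ne_zero fun h0 => (Nat.find_eq_zero hex |>.1 h0).not_ge hr1
  exact ⟨n, by have := Nat.find_spec hex; rwa [hn] at this,
    not_lt.1 (Nat.find_min hex (by omega))⟩

theorem measure_Icc_le_sum_visibleChildren (h : IsCantorTree A ε children) {μ : Measure ℝ}
    [IsProbabilityMeasure μ] (hμ : μ (limitSet CantorNode.hull children v₀) = 1)
    (hmass : ∀ n, ∀ v ∈ descendants children v₀ n, μ v.hull ≤ ENNReal.ofReal v.mass)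
    (hv : v ∈ descendants children v₀ n) (hx : x ∈ v.core) (hr : r ≤ v.len) :
    μ (Icc (x - r) (x + r)) ≤
      ENNReal.ofReal (∑ w ∈ visibleChildren children v x r, w.mass) := by
  have hsub : limitSet CantorNode.hull children v₀ ∩ Icc (x - r) (x + r) ⊆
      ⋃ w ∈ visibleChildren children v x r, w.hull := by
    rintro y ⟨hyC, hy⟩
    have hyx : |y - x| ≤ r := abs_le.2 ⟨by linarith [hy.1], by linarith [hy.2]⟩
    have hyv : y ∈ v.hull := v.mem_hull_of_abs_sub_le hx
      (by rw [abs_sub_comm]; exact (hyx.trans hr).trans v.len_le_buffer)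
    obtain ⟨w, hw, hyw⟩ := mem_iUnion₂.1 (h.limitSet_inter_hull_subset hv ⟨hyC, hyv⟩)
    exact mem_biUnion (Finset.mem_filter.2 ⟨hw, y, hyw, hyx⟩) (w.core_subset_hull hyw)
  have hae : limitSet CantorNode.hull children v₀ ∈ ae μ :=
    (mem_ae_iff_prob_eq_one (h.isMassTree.measurableSet_limitSet v₀)).2 hμ
  calc μ (Icc (x - r) (x + r))
      = μ (limitSet CantorNode.hull children v₀ ∩ Icc (x - r) (x + r)) :=
        (Measure.measure_inter_eq_of_ae hae).symm
    _ ≤ ∑ w ∈ visibleChildren children v x r, μ w.hull :=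
        (measure_mono hsub).trans (measure_biUnion_finset_le _ _)
    _ ≤ ∑ w ∈ visibleChildren children v x r, ENNReal.ofReal w.mass :=
        Finset.sum_le_sum fun w hw => hmass (n + 1) w
          (mem_descendants_succ.2 ⟨v, hv, (Finset.mem_filter.1 hw).1⟩)
    _ = _ := (ENNReal.ofReal_sum_of_nonneg fun w _ => w.mass_pos.le).symm

theorem measure_Icc_le (h : IsCantorTree A ε children) {μ : Measure ℝ}
    [IsProbabilityMeasure μ] (hμ : μ (limitSet CantorNode.hull children v₀) = 1)
    (hmass : ∀ n, ∀ v ∈ descendants children v₀ n, μ v.hull ≤ ENNReal.ofReal v.mass)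
    (hr : 0 < r) (hr₀ : ∀ u ∈ children v₀, r ≤ u.len)
    (hx : x ∈ limitSet CantorNode.hull children v₀) :
    μ (Icc (x - r) (x + r)) ≤ ENNReal.ofReal (48 * ε * (-Real.log r)⁻¹) := by
  obtain ⟨v, hv⟩ := h.isMassTree.exists_branch hx
  have hcore (n : ℕ) : x ∈ (v n).core :=
    (h.isChild _ _ (hv n).2.1).hull_subset_core (hv (n + 1)).2.2
  have hdepth (n : ℕ) : n ≤ (v n).depth := by
    rw [h.depth_of_mem_descendants (hv n).1]
    exact Nat.le_add_left _ _
  have hv0 : v 0 = v₀ := Finset.mem_singleton.1 (hv 0).1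
  obtain ⟨n, hlt, hle⟩ := exists_lt_len_le_len hdepth hr (hr₀ _ (hv0 ▸ (hv 0).2.1))
  have hlen : (v (n + 1)).len ≤ Real.exp (-1) := (v (n + 1)).len_le_exp.trans
    (Real.exp_le_exp.2 (neg_le_neg (by exact_mod_cast (Nat.le_add_left 1 n).trans (hdepth _))))
  have hlog : 0 < -Real.log r := neg_pos.2 (Real.log_neg hr
    ((hle.trans hlen).trans_lt (Real.exp_lt_one_iff.2 (by norm_num))))
  refine (h.measure_Icc_le_sum_visibleChildren hμ hmass (hv (n + 1)).1 (hcore _) hle).trans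
    (ENNReal.ofReal_le_ofReal ?_)
  rw [← div_eq_mul_inv, le_div_iff₀ hlog]
  exact h.sum_mass_visibleChildren_mul_neg_log_le (h.isChild _ _ (hv n).2.1).mass_mul_log_le hlen
    (hv (n + 1)).2.1 (hcore (n + 2)) hlt hle

end IsCantorTree

/-! ### The mass distribution principle -/

theorem measure_div_le_gaugeHaus {ω : ℝ → ℝ} {S C : Set ℝ} {μ : Measure ℝ} {c : ℝ≥0∞} {r₀ : ℝ}
    (hr₀ : 0 < r₀) (hCS : C ⊆ S) (hball : ∀ x ∈ C, ∀ r, 0 < r → r ≤ r₀ →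
      μ (Icc (x - r) (x + r)) ≤ ENNReal.ofReal (ω r) * c) :
    μ C / c ≤ gaugeHaus ω S := by
  refine le_iSup₂_of_le r₀ hr₀ (le_iInf₂ fun a b => le_iInf₂ fun hcov hab =>
    ENNReal.div_le_of_le_mul ?_)
  have hIoo (i : ℕ) : μ (Ioo (a i) (b i) ∩ C) ≤ ENNReal.ofReal (ω (b i - a i)) * c := by
    rcases (Ioo (a i) (b i) ∩ C).eq_empty_or_nonempty with hempty | ⟨x, hx, hxC⟩
    · simp only [hempty, measure_empty, zero_le]
    · refine le_trans (measure_mono ?_) (hball x hxC _ (sub_pos.2 (hx.1.trans hx.2)) (hab i).2)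
      exact fun y hy => ⟨by linarith [hx.2, hy.1.1], by linarith [hx.1, hy.1.2]⟩
  calc μ C ≤ μ (⋃ i, Ioo (a i) (b i) ∩ C) := by
        rw [← iUnion_inter]
        exact measure_mono (subset_inter (hCS.trans hcov) Subset.rfl)
    _ ≤ ∑' i, ENNReal.ofReal (ω (b i - a i)) * c :=
        (measure_iUnion_le _).trans (ENNReal.tsum_le_tsum hIoo)
    _ = _ := ENNReal.tsum_mul_right

theorem gaugeHaus_eq_top {ω : ℝ → ℝ} {S : Set ℝ}
    (h : ∀ ε : ℝ, 0 < ε → ∃ (C : Set ℝ) (μ : Measure ℝ) (r₀ : ℝ), C ⊆ S ∧ μ C = 1 ∧ 0 < r₀ ∧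
      ∀ x ∈ C, ∀ r, 0 < r → r ≤ r₀ → μ (Icc (x - r) (x + r)) ≤ ENNReal.ofReal (ε * ω r)) :
    gaugeHaus ω S = ⊤ := by
  refine ENNReal.eq_top_of_forall_nnreal_le fun t => ?_
  have ht : (0 : ℝ) < t + 1 := by positivity
  obtain ⟨C, μ, r₀, hCS, hμ, hr₀, hball⟩ := h (t + 1)⁻¹ (inv_pos.2 ht)
  calc (t : ℝ≥0∞) ≤ ENNReal.ofReal (t + 1) := by
        rw [← ENNReal.ofReal_coe_nnreal]
        exact ENNReal.ofReal_le_ofReal (le_add_of_nonneg_right zero_le_one)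
    _ = μ C / ENNReal.ofReal (t + 1)⁻¹ := by
        rw [hμ, one_div, ← ENNReal.ofReal_inv_of_pos (inv_pos.2 ht), inv_inv]
    _ ≤ gaugeHaus ω S := measure_div_le_gaugeHaus hr₀ hCS fun x hx r hr hrr => by
        rw [mul_comm, ← ENNReal.ofReal_mul (inv_pos.2 ht).le]
        exact hball x hx r hr hrr

theorem omegaS_one {r : ℝ} (hr : 0 < r) : omegaS 1 r = (-Real.log r)⁻¹ := by
  rw [omegaS, if_pos hr, Real.rpow_neg_one]

/-! ### Mass distributions on the resonance level sets -/

theorem exists_tendsto_ofReal_of_pos {δ : ℝ≥0∞} (hδ : 0 < δ) : ∃ A B : ℕ → ℝ, (∀ n, 0 < A n) ∧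
    (∀ n, A n < B n) ∧ Tendsto (fun n => ENNReal.ofReal (A n)) atTop (nhds δ) ∧
    Tendsto (fun n => ENNReal.ofReal (B n)) atTop (nhds δ) := by
  induction δ with
  | top =>
    have hlim (c : ℝ) : Tendsto (fun n : ℕ => ENNReal.ofReal (n + c)) atTop (nhds ⊤) :=
      ENNReal.tendsto_ofReal_atTop.comp
        (tendsto_atTop_add_const_right _ _ tendsto_natCast_atTop_atTop)
    exact ⟨fun n => n + 1, fun n => n + 2, fun n => by positivity, fun n => by linarith,
      hlim 1, hlim 2⟩
  | coe d =>
    refine ⟨fun _ => d, fun n => d + 1 / ((n : ℝ) + 1), fun _ => by exact_mod_cast hδ,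
      fun n => lt_add_of_pos_right _ Nat.one_div_pos_of_nat, ?_, ?_⟩
    · simp only [ENNReal.ofReal_coe_nnreal, tendsto_const_nhds]
    · simpa only [add_zero, ENNReal.ofReal_coe_nnreal] using ENNReal.tendsto_ofReal
        ((tendsto_one_div_add_atTop_nhds_zero_nat (𝕜 := ℝ)).const_add (d : ℝ))

theorem exists_radius_le_len {α : ℝ} {B : ℕ → ℝ} (s : Finset (CantorNode α B)) :
    ∃ r₀ : ℝ, 0 < r₀ ∧ r₀ < 1 ∧ ∀ u ∈ s, r₀ ≤ u.len := by
  have hlen : ∀ᶠ r in nhdsWithin (0 : ℝ) (Ioi 0), ∀ u ∈ s, r ≤ u.len :=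
    (Filter.eventually_all_finset s).2 fun u _ =>
      ((eventually_lt_nhds u.len_pos).filter_mono nhdsWithin_le_nhds).mono fun _ => le_of_lt
  obtain ⟨r₀, hr₀, hr₀1, hlen⟩ := (eventually_mem_nhdsWithin.and
    (((eventually_lt_nhds one_pos).filter_mono nhdsWithin_le_nhds).and hlen)).exists
  exact ⟨r₀, hr₀, hr₀1, hlen⟩

theorem exists_massDistribution_on_resSet_general (α : ℝ) (hα : Irrational α) (δ : ℝ≥0∞)
    (hδ : 0 < δ) :
    (∀ ε : ℝ, 0 < ε →
      ∃ (C : Set ℝ) (μ : Measure ℝ) (r₀ : ℝ),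
        C ⊆ resSet α δ ∧ MeasurableSet C ∧
        IsProbabilityMeasure μ ∧ μ C = 1 ∧
        0 < r₀ ∧ r₀ < 1 ∧
        ∀ x ∈ C, ∀ r : ℝ, 0 < r → r ≤ r₀ →
          μ (Icc (x - r) (x + r)) ≤ ENNReal.ofReal (ε * (-Real.log r)⁻¹)) ∧
    gaugeHaus (omegaS 1) (resSet α δ) = ⊤ := by
  refine (and_iff_left_of_imp fun h => gaugeHaus_eq_top fun ε hε => ?_).2 fun ε hε => ?_
  · obtain ⟨C, μ, r₀, hC, -, -, hμ, hr₀, -, hball⟩ := h ε hε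
    exact ⟨C, μ, r₀, hC, hμ, hr₀, fun x hx r hr hrr => omegaS_one hr ▸ hball x hx r hr hrr⟩
  · obtain ⟨A, B, hA, hAB, hAδ, hBδ⟩ := exists_tendsto_ofReal_of_pos hδ
    obtain ⟨children, h⟩ := exists_isCantorTree hα hA hAB (by positivity : 0 < ε / 48)
    obtain ⟨v₀, hdepth, hmass⟩ := CantorNode.exists_root α ((hA 0).trans (hAB 0))
    obtain ⟨μ, hμ, hμ1, hμmass⟩ :=
      h.isMassTree.exists_measure (by rw [hmass, ENNReal.ofReal_one]) isCompact_Icc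
    obtain ⟨r₀, hr₀, hr₀1, hlen⟩ := exists_radius_le_len (children v₀)
    refine ⟨_, μ, r₀, h.limitSet_subset_resSet hdepth hAδ hBδ,
      h.isMassTree.measurableSet_limitSet v₀, hμ, hμ1, hr₀, hr₀1, fun x hx r hr hrr => ?_⟩
    have hle := h.measure_Icc_le hμ1 hμmass hr (fun u hu => hrr.trans (hlen u hu)) hx
    rwa [mul_div_cancel₀ ε (by norm_num)] at hle

/-- For irrational `α ∈ [0,1]` and `0 < δ ≤ ∞`: for every `ε > 0` there are a Borel set
`C ⊆ D(δ)`, a Borel probability measure `μ` with `μ(C) = 1`, and `r₀ ∈ (0,1)` such that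
`μ(B(x,r)) ≤ ε · (-log r)⁻¹` for all `x ∈ C` and `0 < r ≤ r₀`; in particular
`ℋ^{ω_1}(D(δ)) = ∞`. -/
theorem exists_massDistribution_on_resSet (α : ℝ) (hα : Irrational α)
    (hα01 : α ∈ Set.Icc (0 : ℝ) 1) (δ : ℝ≥0∞) (hδ : 0 < δ) :
    (∀ ε : ℝ, 0 < ε →
      ∃ (C : Set ℝ) (μ : Measure ℝ) (r₀ : ℝ),
        C ⊆ resSet α δ ∧ MeasurableSet C ∧
        IsProbabilityMeasure μ ∧ μ C = 1 ∧
        0 < r₀ ∧ r₀ < 1 ∧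
        ∀ x ∈ C, ∀ r : ℝ, 0 < r → r ≤ r₀ →
          μ (Set.Icc (x - r) (x + r)) ≤ ENNReal.ofReal (ε * (-Real.log r)⁻¹)) ∧
    gaugeHaus (omegaS 1) (resSet α δ) = ⊤ :=
  exists_massDistribution_on_resSet_general α hα δ hδ
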